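/- arXiv:1905.01259 — 3 statements merged into one kernel-verified Lean document; each statement's English description precedes it below -/
import Mathlib

section
/- Let D be a finite digraph of order n with minimum in-degree δ⁻ and maximum out-degree Δ⁺, and suppose γ₁ᵒ(D) = (1 + δ⁻)·n / (2Δ⁺ + δ⁻ + 1). If S is a global offensive 1-alliance in D of minimum cardinality, then: (a) every vertex v ∉ S has in-degree exactly δ⁻ in D; (b) every vertex v ∉ S satisfies deg⁻_S(v) = deg⁻_{V(D)\S}(v) + 1; (c) every vertex of S has exactly Δ⁺ out-neighbors, all of them outside S; and (d) all vertices of V(D)\S have the same in-degree r' in the subdigraph induced by V(D)\S, and |V(D)\S|·(r' + 1) = |S|·Δ⁺. -/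
open Finset

variable {V : Type*}

/-- In-degree of `v` from the set `T` in the digraph with arc relation `A`. -/
def inDegOn [Fintype V] (A : V → V → Prop) [DecidableRel A] (T : Finset V) (v : V) : ℕ :=
  (T.filter fun u => A u v).card

/-- Out-degree of `v` to the set `T` in the digraph with arc relation `A`. -/
def outDegOn [Fintype V] (A : V → V → Prop) [DecidableRel A] (T : Finset V) (v : V) : ℕ :=
  (T.filter fun w => A v w).card

/-- `S` is a global offensive `k`-alliance in the digraph with arc relation `A`. -/
def GOkA [Fintype V] [DecidableEq V] (A : V → V → Prop) [DecidableRel A] (k : ℤ)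
    (S : Finset V) : Prop :=
  ∀ v ∉ S, (∃ u ∈ S, A u v) ∧ ((inDegOn A Sᶜ v : ℤ) + k ≤ (inDegOn A S v : ℤ))

/-- The global offensive `k`-alliance number of a digraph. -/
noncomputable def goNum [Fintype V] [DecidableEq V] (A : V → V → Prop) [DecidableRel A]
    (k : ℤ) : ℕ :=
  sInf {m | ∃ S : Finset V, GOkA A k S ∧ S.card = m}

/-- Maximum out-degree `Δ⁺`. -/
def maxOutDeg [Fintype V] (A : V → V → Prop) [DecidableRel A] : ℕ :=
  univ.sup fun v => outDegOn A univ v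

/-- Maximum in-degree `Δ⁻`. -/
def maxInDeg [Fintype V] (A : V → V → Prop) [DecidableRel A] : ℕ :=
  univ.sup fun v => inDegOn A univ v

/-- Minimum in-degree `δ⁻`. -/
def minInDeg [Fintype V] [Nonempty V] (A : V → V → Prop) [DecidableRel A] : ℕ :=
  univ.inf' univ_nonempty fun v => inDegOn A univ v

/-!
For a global offensive `k`-alliance `S`, count the arcs from `S` to `Sᶜ` twice. Each vertex of `S`
sends at most `Δ⁺` of them, while a vertex `v ∉ S` satisfies
`δ⁻ ≤ deg⁻_S(v) + deg⁻_{Sᶜ}(v) ≤ 2 deg⁻_S(v) - k`, so that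
`(k + δ⁻) |Sᶜ| ≤ 2 |A(S, Sᶜ)| ≤ 2 Δ⁺ |S|`. The assumed value of `|S|` says precisely that the
two ends of this chain agree, hence each of the vertexwise inequalities is an equality.
-/

section

variable [Fintype V] {A : V → V → Prop} [DecidableRel A]

theorem minInDeg_le_inDegOn_univ [Nonempty V] (v : V) : minInDeg A ≤ inDegOn A univ v :=
  inf'_le (inDegOn A univ) (mem_univ v)

theorem outDegOn_univ_le_maxOutDeg (u : V) : outDegOn A univ u ≤ maxOutDeg A :=
  le_sup (f := outDegOn A univ) (mem_univ u)

theorem outDegOn_le_maxOutDeg (T : Finset V) (u : V) : outDegOn A T u ≤ maxOutDeg A :=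
  (card_le_card (filter_subset_filter _ (subset_univ T))).trans (outDegOn_univ_le_maxOutDeg u)

theorem sum_outDegOn_eq_sum_inDegOn (S T : Finset V) :
    ∑ u ∈ S, outDegOn A T u = ∑ v ∈ T, inDegOn A S v :=
  sum_card_bipartiteAbove_eq_sum_card_bipartiteBelow A

theorem sum_outDegOn_le_card_mul_maxOutDeg (S T : Finset V) :
    ∑ u ∈ S, outDegOn A T u ≤ S.card * maxOutDeg A :=
  sum_le_card_nsmul S _ _ fun u _ => outDegOn_le_maxOutDeg T u

variable [DecidableEq V]

theorem inDegOn_add_inDegOn_compl (S : Finset V) (v : V) :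
    inDegOn A S v + inDegOn A Sᶜ v = inDegOn A univ v := by
  simp only [inDegOn, card_filter, sum_add_sum_compl]

theorem outDegOn_add_outDegOn_compl (S : Finset V) (u : V) :
    outDegOn A S u + outDegOn A Sᶜ u = outDegOn A univ u := by
  simp only [outDegOn, card_filter, sum_add_sum_compl]

theorem outDegOn_univ_eq_maxOutDeg_and_outDegOn_eq_zero {S : Finset V} {u : V}
    (hu : outDegOn A Sᶜ u = maxOutDeg A) :
    outDegOn A univ u = maxOutDeg A ∧ outDegOn A S u = 0 := by
  have hsplit := outDegOn_add_outDegOn_compl (A := A) S u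
  have hle := outDegOn_univ_le_maxOutDeg (A := A) u
  omega

namespace GOkA

variable {k : ℤ} {S : Finset V}

theorem nonempty [Nonempty V] (hS : GOkA A k S) : S.Nonempty := by
  obtain ⟨v⟩ := ‹Nonempty V›
  by_cases hv : v ∈ S
  · exact ⟨v, hv⟩
  · obtain ⟨u, hu, -⟩ := (hS v hv).1
    exact ⟨u, hu⟩

variable [Nonempty V]

theorem add_minInDeg_le_two_mul_inDegOn (hS : GOkA A k S) {v : V} (hv : v ∉ S) :
    k + minInDeg A ≤ 2 * inDegOn A S v := by
  have hsplit := inDegOn_add_inDegOn_compl (A := A) S v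
  have hmin := minInDeg_le_inDegOn_univ (A := A) v
  have hoff := (hS v hv).2
  omega

theorem inDegOn_univ_eq_minInDeg_and_inDegOn_eq_add (hS : GOkA A k S) {v : V} (hv : v ∉ S)
    (htight : 2 * (inDegOn A S v : ℤ) = k + minInDeg A) :
    inDegOn A univ v = minInDeg A ∧ (inDegOn A S v : ℤ) = inDegOn A Sᶜ v + k := by
  have hsplit := inDegOn_add_inDegOn_compl (A := A) S v
  have hmin := minInDeg_le_inDegOn_univ (A := A) v
  have hoff := (hS v hv).2
  omega

theorem card_compl_mul_le_two_mul_sum_outDegOn (hS : GOkA A k S) :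
    Sᶜ.card * (k + minInDeg A) ≤ 2 * ∑ u ∈ S, (outDegOn A Sᶜ u : ℤ) := by
  calc (Sᶜ.card : ℤ) * (k + minInDeg A)
      = ∑ _v ∈ Sᶜ, (k + minInDeg A : ℤ) := by rw [sum_const, nsmul_eq_mul]
    _ ≤ ∑ v ∈ Sᶜ, 2 * (inDegOn A S v : ℤ) :=
        sum_le_sum fun _ hv => hS.add_minInDeg_le_two_mul_inDegOn (mem_compl.1 hv)
    _ = 2 * ∑ u ∈ S, (outDegOn A Sᶜ u : ℤ) := by
        rw [← mul_sum]
        exact_mod_cast congrArg (2 * ·) (sum_outDegOn_eq_sum_inDegOn S Sᶜ).symm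

theorem outDegOn_compl_eq_maxOutDeg (hS : GOkA A k S)
    (hbal : Sᶜ.card * (k + minInDeg A) = 2 * (S.card * maxOutDeg A : ℤ)) :
    ∀ u ∈ S, outDegOn A Sᶜ u = maxOutDeg A := by
  refine (sum_eq_sum_iff_of_le fun u _ => outDegOn_le_maxOutDeg Sᶜ u).1 ?_
  rw [sum_const, smul_eq_mul]
  refine (sum_outDegOn_le_card_mul_maxOutDeg S Sᶜ).antisymm ?_
  have hle := hS.card_compl_mul_le_two_mul_sum_outDegOn
  rw [hbal] at hle
  exact_mod_cast le_of_mul_le_mul_left hle two_pos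

theorem two_mul_inDegOn_eq_add_minInDeg (hS : GOkA A k S)
    (hbal : Sᶜ.card * (k + minInDeg A) = 2 * (S.card * maxOutDeg A : ℤ)) :
    ∀ v ∉ S, 2 * (inDegOn A S v : ℤ) = k + minInDeg A := by
  have hsum : ∑ _v ∈ Sᶜ, (k + minInDeg A : ℤ) = ∑ v ∈ Sᶜ, 2 * (inDegOn A S v : ℤ) := by
    have harcs : ∑ v ∈ Sᶜ, inDegOn A S v = S.card * maxOutDeg A := by
      rw [← sum_outDegOn_eq_sum_inDegOn, sum_congr rfl (hS.outDegOn_compl_eq_maxOutDeg hbal),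
        sum_const, smul_eq_mul]
    rw [sum_const, nsmul_eq_mul, hbal, ← mul_sum]
    exact_mod_cast congrArg (2 * ·) harcs.symm
  have htight := (sum_eq_sum_iff_of_le fun _ hv =>
    hS.add_minInDeg_le_two_mul_inDegOn (mem_compl.1 hv)).1 hsum
  exact fun v hv => (htight v (mem_compl.2 hv)).symm

theorem card_compl_mul_eq_of_card_eq_div (hS : GOkA A k S)
    (hcard : (S.card : ℚ) = (k + minInDeg A) * Fintype.card V /
      (2 * maxOutDeg A + minInDeg A + k)) :
    Sᶜ.card * (k + minInDeg A) = 2 * (S.card * maxOutDeg A : ℤ) := by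
  have hden : (2 * maxOutDeg A + minInDeg A + k : ℚ) ≠ 0 := by
    intro hzero
    rw [hzero, div_zero, Nat.cast_eq_zero, card_eq_zero] at hcard
    exact hS.nonempty.ne_empty hcard
  rw [eq_div_iff hden, ← card_add_card_compl S] at hcard
  have hcross : (S.card : ℤ) * (2 * maxOutDeg A + minInDeg A + k)
      = (k + minInDeg A) * (S.card + Sᶜ.card) := by exact_mod_cast hcard
  linarith

theorem exists_inDegOn_compl_eq (hS : GOkA A k S)
    (hbal : Sᶜ.card * (k + minInDeg A) = 2 * (S.card * maxOutDeg A : ℤ)) :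
    ∃ r' : ℕ, (∀ v ∉ S, inDegOn A Sᶜ v = r') ∧
      (Sᶜ.card * (r' + k) : ℤ) = S.card * maxOutDeg A := by
  have hdeg : ∀ v ∉ S, 2 * (inDegOn A Sᶜ v + k : ℤ) = k + minInDeg A := fun v hv => by
    have htight := hS.two_mul_inDegOn_eq_add_minInDeg hbal v hv
    rwa [(hS.inDegOn_univ_eq_minInDeg_and_inDegOn_eq_add hv htight).2] at htight
  obtain hempty | ⟨w, hw⟩ := Sᶜ.eq_empty_or_nonempty
  · refine ⟨0, fun v hv => absurd (mem_compl.2 hv) (by simp [hempty]), ?_⟩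
    rw [hempty, card_empty, Nat.cast_zero, zero_mul] at hbal ⊢
    linarith
  · have hdeg_w := hdeg w (mem_compl.1 hw)
    refine ⟨inDegOn A Sᶜ w, fun v hv => ?_, ?_⟩
    · have hdeg_v := hdeg v hv
      omega
    · rw [← hdeg_w] at hbal
      linarith

end GOkA

theorem goNum_lower_bound_equality_case_general [Nonempty V] {k : ℤ} {S : Finset V}
    (hS : GOkA A k S)
    (hcard : (S.card : ℚ) = (k + minInDeg A) * Fintype.card V /
      (2 * maxOutDeg A + minInDeg A + k)) :
    (∀ v ∉ S, inDegOn A univ v = minInDeg A) ∧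
    (∀ v ∉ S, (inDegOn A S v : ℤ) = inDegOn A Sᶜ v + k) ∧
    (∀ u ∈ S, outDegOn A univ u = maxOutDeg A ∧ outDegOn A S u = 0) ∧
    (∃ r' : ℕ, (∀ v ∉ S, inDegOn A Sᶜ v = r') ∧
      (Sᶜ.card * (r' + k) : ℤ) = S.card * maxOutDeg A) := by
  have hbal := hS.card_compl_mul_eq_of_card_eq_div hcard
  have hin := fun v hv => hS.inDegOn_univ_eq_minInDeg_and_inDegOn_eq_add hv
    (hS.two_mul_inDegOn_eq_add_minInDeg hbal v hv)
  exact ⟨fun v hv => (hin v hv).1, fun v hv => (hin v hv).2,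
    fun u hu => outDegOn_univ_eq_maxOutDeg_and_outDegOn_eq_zero
      (hS.outDegOn_compl_eq_maxOutDeg hbal u hu),
    hS.exists_inDegOn_compl_eq hbal⟩

end

/-- Equality case of the lower bound `γ₁ᵒ(D) ≥ (1 + δ⁻)n/(2Δ⁺ + δ⁻ + 1)`: if equality holds
and `S` is a minimum global offensive 1-alliance, then (a) every vertex outside `S` has
in-degree exactly `δ⁻`; (b) every vertex `v ∉ S` satisfies `deg⁻_S(v) = deg⁻_{S̄}(v) + 1`;
(c) every vertex of `S` has exactly `Δ⁺` out-neighbors, all outside `S`; and (d) all vertices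
outside `S` have the same in-degree `r'` in the subdigraph induced by `S̄`, with
`|S̄|·(r' + 1) = |S|·Δ⁺`. -/
theorem goNum_lower_bound_equality_case [Fintype V] [DecidableEq V] [Nonempty V]
    (A : V → V → Prop) [DecidableRel A] (hloopless : ∀ v, ¬ A v v)
    (heq : (goNum A 1 : ℚ) =
      (1 + (minInDeg A : ℚ)) * (Fintype.card V : ℚ) /
        (2 * (maxOutDeg A : ℚ) + (minInDeg A : ℚ) + 1))
    (S : Finset V) (hS : GOkA A 1 S) (hScard : S.card = goNum A 1) :
    (∀ v ∉ S, inDegOn A univ v = minInDeg A) ∧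
    (∀ v ∉ S, inDegOn A S v = inDegOn A Sᶜ v + 1) ∧
    (∀ u ∈ S, outDegOn A univ u = maxOutDeg A ∧ outDegOn A S u = 0) ∧
    (∃ r' : ℕ, (∀ v ∉ S, inDegOn A Sᶜ v = r') ∧
      Sᶜ.card * (r' + 1) = S.card * maxOutDeg A) := by
  exact_mod_cast goNum_lower_bound_equality_case_general (k := 1) hS
    (by rw [hScard, heq, Int.cast_one])
end

section
/- Let G be a finite simple graph of order n with minimum degree δ and maximum degree Δ, and let k be an integer with 2 - Δ ≤ k ≤ Δ. Then γₖᵒ(G) ≥ ⌈(k + δ)·n / (2Δ + δ + k)⌉. -/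
open Finset

variable {V : Type*}

/-- `S` is a global offensive `k`-alliance in the simple graph `G`. -/
def GraphGOkA [Fintype V] [DecidableEq V] (G : SimpleGraph V) [DecidableRel G.Adj] (k : ℤ)
    (S : Finset V) : Prop :=
  ∀ v ∉ S, (∃ u ∈ S, G.Adj u v) ∧
    (((Sᶜ.filter fun u => G.Adj u v).card : ℤ) + k ≤ ((S.filter fun u => G.Adj u v).card : ℤ))

/-- The global offensive `k`-alliance number of a simple graph. -/
noncomputable def graphGoNum [Fintype V] [DecidableEq V] (G : SimpleGraph V)
    [DecidableRel G.Adj] (k : ℤ) : ℕ :=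
  sInf {m | ∃ S : Finset V, GraphGOkA G k S ∧ S.card = m}

/-!
If `S` is an alliance, every `v ∉ S` has at least `(k + deg v) / 2` neighbours in `S`. Counting the
edges between `S` and its complement from both ends gives
`(k + δ) (n - |S|) ≤ 2 ∑_{u ∈ S} deg u ≤ 2 Δ |S|`, which rearranges to the bound.
-/

section Degree

variable [Fintype V] (G : SimpleGraph V) [DecidableRel G.Adj]

theorem card_filter_adj_add_card_filter_compl_adj [DecidableEq V] (S : Finset V) (v : V) :
    #{u ∈ S | G.Adj u v} + #{u ∈ Sᶜ | G.Adj u v} = G.degree v := by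
  simp only [card_filter, sum_add_sum_compl]
  rw [← card_filter, ← G.card_neighborFinset_eq_degree, G.neighborFinset_eq_filter]
  simp only [G.adj_comm]

theorem card_filter_adj_le_degree (T : Finset V) (u : V) : #{v ∈ T | G.Adj u v} ≤ G.degree u := by
  rw [← G.card_neighborFinset_eq_degree, G.neighborFinset_eq_filter]
  exact card_le_card (filter_subset_filter _ (subset_univ T))

theorem sum_card_filter_adj_le_sum_degree (S T : Finset V) :
    ∑ v ∈ T, #{u ∈ S | G.Adj u v} ≤ ∑ u ∈ S, G.degree u :=
  calc ∑ v ∈ T, #{u ∈ S | G.Adj u v}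
      = ∑ u ∈ S, #{v ∈ T | G.Adj u v} :=
        (sum_card_bipartiteAbove_eq_sum_card_bipartiteBelow G.Adj).symm
    _ ≤ ∑ u ∈ S, G.degree u := sum_le_sum fun u _ ↦ card_filter_adj_le_degree G T u

end Degree

section Alliance

variable [Fintype V] [DecidableEq V] {G : SimpleGraph V} [DecidableRel G.Adj] {k : ℤ}
  {S : Finset V}

theorem GraphGOkA.add_degree_le (hS : GraphGOkA G k S) {v : V} (hv : v ∉ S) :
    k + G.degree v ≤ 2 * #{u ∈ S | G.Adj u v} := by
  have h_offensive := (hS v hv).2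
  have h_degree := card_filter_adj_add_card_filter_compl_adj G S v
  lia

theorem GraphGOkA.sum_add_degree_le (hS : GraphGOkA G k S) :
    ∑ v ∈ Sᶜ, (k + G.degree v) ≤ 2 * ∑ u ∈ S, (G.degree u : ℤ) :=
  calc ∑ v ∈ Sᶜ, (k + G.degree v)
      ≤ ∑ v ∈ Sᶜ, 2 * (#{u ∈ S | G.Adj u v} : ℤ) :=
        sum_le_sum fun _ hv ↦ hS.add_degree_le (mem_compl.mp hv)
    _ = 2 * ∑ v ∈ Sᶜ, (#{u ∈ S | G.Adj u v} : ℤ) := (mul_sum ..).symm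
    _ ≤ 2 * ∑ u ∈ S, (G.degree u : ℤ) := by
        gcongr
        exact_mod_cast sum_card_filter_adj_le_sum_degree G S Sᶜ

theorem GraphGOkA.mul_card_le_card_mul (hS : GraphGOkA G k S) :
    (k + G.minDegree) * Fintype.card V ≤ #S * (2 * G.maxDegree + G.minDegree + k) := by
  have h_cut : (#Sᶜ : ℤ) * (k + G.minDegree) ≤ 2 * (#S * G.maxDegree) :=
    calc (#Sᶜ : ℤ) * (k + G.minDegree)
        = ∑ _v ∈ Sᶜ, (k + G.minDegree) := by rw [sum_const, nsmul_eq_mul]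
      _ ≤ ∑ v ∈ Sᶜ, (k + G.degree v) := by
          gcongr with v
          exact G.minDegree_le_degree v
      _ ≤ 2 * ∑ u ∈ S, (G.degree u : ℤ) := hS.sum_add_degree_le
      _ ≤ 2 * ∑ _u ∈ S, (G.maxDegree : ℤ) := by
          gcongr with u
          exact G.degree_le_maxDegree u
      _ = 2 * (#S * G.maxDegree) := by rw [sum_const, nsmul_eq_mul]
  have h_order : (#S : ℤ) + #Sᶜ = Fintype.card V := mod_cast card_add_card_compl S
  rw [← h_order]
  linarith

variable (G k)

theorem exists_graphGOkA_card_eq_graphGoNum :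
    ∃ S : Finset V, GraphGOkA G k S ∧ #S = graphGoNum G k :=
  Nat.sInf_mem (s := {m | ∃ S : Finset V, GraphGOkA G k S ∧ #S = m})
    ⟨_, univ, fun v hv ↦ absurd (mem_univ v) hv, rfl⟩

theorem graphGoNum_lower_bound_general
    (hpos : 0 < 2 * (G.maxDegree : ℤ) + G.minDegree + k) :
    ⌈((k + G.minDegree) * Fintype.card V / (2 * G.maxDegree + G.minDegree + k) : ℚ)⌉ ≤
      (graphGoNum G k : ℤ) := by
  obtain ⟨S, hS, h_card⟩ := exists_graphGOkA_card_eq_graphGoNum G k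
  rw [Int.ceil_le, div_le_iff₀ (mod_cast hpos), ← h_card]
  exact_mod_cast hS.mul_card_le_card_mul

end Alliance

/-- For a graph `G` of order `n`, minimum degree `δ` and maximum degree `Δ`, and any integer
`k` with `2 - Δ ≤ k ≤ Δ`, we have `γₖᵒ(G) ≥ ⌈(k + δ)n / (2Δ + δ + k)⌉`. -/
theorem graphGoNum_lower_bound [Fintype V] [DecidableEq V]
    (G : SimpleGraph V) [DecidableRel G.Adj] (k : ℤ)
    (hk₁ : 2 - (G.maxDegree : ℤ) ≤ k) (hk₂ : k ≤ (G.maxDegree : ℤ)) :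
    (graphGoNum G k : ℤ) ≥
      ⌈((k + (G.minDegree : ℤ)) * (Fintype.card V) /
        (2 * (G.maxDegree : ℤ) + (G.minDegree : ℤ) + k) : ℚ)⌉ := by
  exact graphGoNum_lower_bound_general G k (by lia)
end

section
/- Let b ≥ 1 be an integer and let D' be the digraph obtained from a directed cycle on vertices v₁, …, v_{2b} by adding new vertices v'₁, …, v'_{2b} and the arcs (v'ᵢ, vᵢ) for 1 ≤ i ≤ 2b. Then γ(D') = 2b and γ₁ᵒ(D') = 3b; in particular γ₁ᵒ(D') − γ(D') = b, so the difference between the global offensive 1-alliance number and the domination number can be arbitrarily large even for connected functional digraphs. -/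
open Finset

variable {V : Type*}

/-- `S` is a dominating set of the digraph with arc relation `A`. -/
def Dominating [Fintype V] (A : V → V → Prop) (S : Finset V) : Prop :=
  ∀ v ∉ S, ∃ u ∈ S, A u v

/-- The domination number of a digraph. -/
noncomputable def domNum [Fintype V] (A : V → V → Prop) : ℕ :=
  sInf {m | ∃ S : Finset V, Dominating A S ∧ S.card = m}

/-- The arc relation of the digraph `D'` obtained from a directed cycle on
`v₁, …, v_{2b}` (the left summand, `vᵢ → vᵢ₊₁` cyclically) by adding new vertices
`v'₁, …, v'_{2b}` (the right summand) and the arcs `(v'ᵢ, vᵢ)`. -/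
def DprimeArc (b : ℕ) : (Fin (2 * b) ⊕ Fin (2 * b)) → (Fin (2 * b) ⊕ Fin (2 * b)) → Prop
  | Sum.inl i, Sum.inl j => (j : ℕ) = ((i : ℕ) + 1) % (2 * b)
  | Sum.inr i, Sum.inl j => i = j
  | _, _ => False

instance (b : ℕ) : DecidableRel (DprimeArc b) := fun u v => by
  rcases u with i | i <;> rcases v with j | j <;> simp only [DprimeArc] <;> infer_instance

/-! A source belongs to every dominating set. Hence an alliance of the digraph obtained by attaching
a new source `v'` to every vertex `v` of a digraph `D` consists of all the sources and of a set `T`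
of old vertices, and the arc `(v', v)` exactly pays for the offset `1`: what remains is that no
vertex outside `T` has more in-neighbors outside `T` than inside. When in-degrees in `D` are at
most one, this says that `T` is a vertex cover of `D`, so the alliance number is the order of `D`
plus its vertex cover number, which is `⌈n / 2⌉` for a cycle of length `n`. -/

section ArcCover

/-- The set `T` covers the arcs of the digraph with arc relation `A`: it is a vertex cover of the
underlying graph, and contains every vertex carrying a loop. -/
def IsArcCover (A : V → V → Prop) (T : Finset V) : Prop :=
  ∀ ⦃u v⦄, A u v → u ∈ T ∨ v ∈ T

/-- The vertex cover number of a digraph: the minimum cardinality of a set covering its arcs. -/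
noncomputable def arcCoverNum (A : V → V → Prop) : ℕ :=
  sInf {m | ∃ T : Finset V, IsArcCover A T ∧ T.card = m}

variable {A : V → V → Prop}

theorem IsArcCover.arcCoverNum_le {T : Finset V} (hT : IsArcCover A T) :
    arcCoverNum A ≤ T.card :=
  Nat.sInf_le ⟨T, hT, rfl⟩

theorem exists_isArcCover_card_eq_arcCoverNum [Finite V] (A : V → V → Prop) :
    ∃ T : Finset V, IsArcCover A T ∧ T.card = arcCoverNum A := by
  have := Fintype.ofFinite V
  have covers_nonempty : {m | ∃ T : Finset V, IsArcCover A T ∧ T.card = m}.Nonempty :=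
    ⟨_, univ, fun u _ _ => Or.inl (mem_univ u), rfl⟩
  exact Nat.sInf_mem covers_nonempty

theorem card_le_two_mul_card_of_forall_mem_or_apply_mem [Fintype V] {f : V → V}
    (hf : Function.Injective f) {T : Finset V} (hT : ∀ v, v ∈ T ∨ f v ∈ T) :
    Fintype.card V ≤ 2 * T.card := by
  classical
  have compl_le : Tᶜ.card ≤ T.card :=
    card_le_card_of_injOn f (fun v hv => (hT v).resolve_left (mem_compl.1 hv)) hf.injOn
  calc Fintype.card V = T.card + Tᶜ.card := (card_add_card_compl T).symm
    _ ≤ 2 * T.card := by omega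

theorem isArcCover_iff_inDegOn_compl_le [Fintype V] [DecidableEq V] [DecidableRel A]
    (hA : Relator.LeftUnique A) {T : Finset V} :
    IsArcCover A T ↔ ∀ v ∉ T, inDegOn A Tᶜ v ≤ inDegOn A T v := by
  constructor
  · intro hT v hv
    have no_outside : inDegOn A Tᶜ v = 0 :=
      card_eq_zero.2 <| filter_eq_empty_iff.2 fun u hu huv =>
        (hT huv).elim (mem_compl.1 hu) hv
    exact no_outside ▸ Nat.zero_le _
  · intro hT u v huv
    by_contra! ⟨hu, hv⟩
    have outside_pos : 0 < inDegOn A Tᶜ v :=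
      card_pos.2 ⟨u, mem_filter.2 ⟨mem_compl.2 hu, huv⟩⟩
    obtain ⟨w, hw⟩ := card_pos.1 (outside_pos.trans_le (hT v hv))
    rw [mem_filter] at hw
    exact hu (hA hw.2 huv ▸ hw.1)

end ArcCover

section Pendant

/-- Attaches to every vertex `v` of the digraph with arc relation `A` a new vertex `v'` whose only
arc is `(v', v)`. The old vertices form the left summand, the new ones the right summand. -/
def pendantArc (A : V → V → Prop) : V ⊕ V → V ⊕ V → Prop
  | Sum.inl u, Sum.inl v => A u v
  | Sum.inr u, Sum.inl v => u = v
  | _, _ => False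

instance [DecidableEq V] (A : V → V → Prop) [DecidableRel A] : DecidableRel (pendantArc A) :=
  fun u v => by rcases u with u | u <;> rcases v with v | v <;> unfold pendantArc <;> infer_instance

variable [Fintype V] {A : V → V → Prop}

theorem dominating_pendantArc_iff {S : Finset (V ⊕ V)} :
    Dominating (pendantArc A) S ↔ S.toRight = univ := by
  simp only [eq_univ_iff_forall, mem_toRight]
  constructor
  · intro hS v
    by_contra hv
    obtain ⟨u | u, -, hu⟩ := hS _ hv <;> exact hu
  · rintro hS (v | v) hv
    · exact ⟨Sum.inr v, hS v, rfl⟩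
    · exact absurd (hS v) hv

theorem domNum_pendantArc (A : V → V → Prop) : domNum (pendantArc A) = Fintype.card V := by
  refine IsLeast.csInf_eq ⟨⟨(∅ : Finset V).disjSum univ, ?_, by simp⟩, ?_⟩
  · exact dominating_pendantArc_iff.2 toRight_disjSum
  · rintro _ ⟨S, hS, rfl⟩
    calc Fintype.card V = S.toRight.card := by rw [dominating_pendantArc_iff.1 hS, card_univ]
      _ ≤ S.card := card_toRight_le

variable [DecidableEq V] [DecidableRel A]

theorem inDegOn_pendantArc_inl (S : Finset (V ⊕ V)) (v : V) :
    inDegOn (pendantArc A) S (Sum.inl v) =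
      inDegOn A S.toLeft v + if v ∈ S.toRight then 1 else 0 := by
  have hleft : (S.filter fun u => pendantArc A u (Sum.inl v)).toLeft =
      S.toLeft.filter fun u => A u v := by
    ext u
    simp only [mem_toLeft, mem_filter]
    rfl
  have hright : (S.filter fun u => pendantArc A u (Sum.inl v)).toRight =
      S.toRight.filter fun u => u = v := by
    ext u
    simp only [mem_toRight, mem_filter]
    rfl
  unfold inDegOn
  rw [← card_toLeft_add_card_toRight, hleft, hright, filter_eq', apply_ite card, card_singleton,
    card_empty]

theorem GOkA.dominating {k : ℤ} {S : Finset V} (hS : GOkA A k S) : Dominating A S :=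
  fun v hv => (hS v hv).1

theorem gokA_add_one_pendantArc_iff {k : ℤ} {S : Finset (V ⊕ V)} :
    GOkA (pendantArc A) (k + 1) S ↔ S.toRight = univ ∧
      ∀ v ∉ S.toLeft, (inDegOn A S.toLeftᶜ v : ℤ) + k ≤ inDegOn A S.toLeft v := by
  have toLeft_compl : Sᶜ.toLeft = S.toLeftᶜ := by ext; simp
  have degree_iff (hS : S.toRight = univ) (v : V) :
      (inDegOn (pendantArc A) Sᶜ (Sum.inl v) : ℤ) + (k + 1) ≤ inDegOn (pendantArc A) S (Sum.inl v) ↔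
        (inDegOn A S.toLeftᶜ v : ℤ) + k ≤ inDegOn A S.toLeft v := by
    have hv : Sum.inr v ∈ S := mem_toRight.1 (hS ▸ mem_univ v)
    simp only [inDegOn_pendantArc_inl, toLeft_compl, mem_toRight, mem_compl, hv, not_true, if_true,
      if_false]
    omega
  constructor
  · intro hS
    have hright := dominating_pendantArc_iff.1 hS.dominating
    exact ⟨hright, fun v hv => (degree_iff hright v).1 (hS _ (mem_toLeft.not.1 hv)).2⟩
  · rintro ⟨hright, hdeg⟩ v hv
    refine ⟨dominating_pendantArc_iff.2 hright v hv, ?_⟩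
    rcases v with v | v
    · exact (degree_iff hright v).2 (hdeg v (mem_toLeft.not.2 hv))
    · exact absurd (hright ▸ mem_univ v) (mem_toRight.not.2 hv)

theorem gokA_one_pendantArc_iff (hA : Relator.LeftUnique A) {S : Finset (V ⊕ V)} :
    GOkA (pendantArc A) 1 S ↔ S.toRight = univ ∧ IsArcCover A S.toLeft := by
  rw [isArcCover_iff_inDegOn_compl_le hA, ← zero_add (1 : ℤ), gokA_add_one_pendantArc_iff]
  simp only [add_zero, Nat.cast_le]

theorem goNum_one_pendantArc (hA : Relator.LeftUnique A) :
    goNum (pendantArc A) 1 = Fintype.card V + arcCoverNum A := by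
  obtain ⟨T, hT, hcard⟩ := exists_isArcCover_card_eq_arcCoverNum A
  refine IsLeast.csInf_eq ⟨⟨T.disjSum univ, ?_, ?_⟩, ?_⟩
  · simp [gokA_one_pendantArc_iff hA, hT]
  · rw [card_disjSum, card_univ, hcard, add_comm]
  · rintro _ ⟨S, hS, rfl⟩
    obtain ⟨hright, hleft⟩ := (gokA_one_pendantArc_iff hA).1 hS
    rw [← card_toLeft_add_card_toRight, hright, card_univ, add_comm]
    exact Nat.add_le_add_right hleft.arcCoverNum_le _

end Pendant

section Cycle

/-- The arc relation of the directed cycle `0 → 1 → ⋯ → n - 1 → 0`, a loop when `n = 1`. -/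
def cycleArc (n : ℕ) (i j : Fin n) : Prop :=
  finRotate n i = j

instance (n : ℕ) : DecidableRel (cycleArc n) :=
  fun i j => inferInstanceAs (Decidable (finRotate n i = j))

theorem leftUnique_cycleArc (n : ℕ) : Relator.LeftUnique (cycleArc n) :=
  fun _ _ _ hi hj => (finRotate n).injective (hi.trans hj.symm)

theorem val_finRotate {n : ℕ} (i : Fin n) : (finRotate n i : ℕ) = (i + 1) % n := by
  have := i.neZero
  rw [finRotate_apply, Fin.val_add, Fin.val_one', Nat.add_mod_mod]

theorem isArcCover_cycleArc_filter_even (n : ℕ) :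
    IsArcCover (cycleArc n) {i | Even (i : ℕ)} := by
  rintro i _ rfl
  rw [mem_filter_univ, mem_filter_univ, val_finRotate]
  rcases (Nat.add_one_le_of_lt i.isLt).lt_or_eq with hlt | heq
  · rw [Nat.mod_eq_of_lt hlt, Nat.even_add_one]
    exact em _
  · rw [heq, Nat.mod_self]
    exact Or.inr Even.zero

theorem card_filter_even_val (n : ℕ) :
    #{i : Fin n | Even (i : ℕ)} = (n + 1) / 2 := by
  induction n with
  | zero => rfl
  | succ n ih =>
    rw [card_filter, Fin.sum_univ_castSucc]
    simp only [Fin.val_castSucc, Fin.val_last]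
    rw [← card_filter, ih]
    split_ifs with hn
    · obtain ⟨m, rfl⟩ := hn
      omega
    · obtain ⟨m, rfl⟩ := Nat.not_even_iff_odd.1 hn
      omega

theorem arcCoverNum_cycleArc (n : ℕ) : arcCoverNum (cycleArc n) = (n + 1) / 2 := by
  refine IsLeast.csInf_eq
    ⟨⟨_, isArcCover_cycleArc_filter_even n, card_filter_even_val n⟩, ?_⟩
  rintro _ ⟨T, hT, rfl⟩
  have hcard := card_le_two_mul_card_of_forall_mem_or_apply_mem (finRotate n).injective
    fun i => hT (rfl : cycleArc n i (finRotate n i))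
  rw [Fintype.card_fin] at hcard
  omega

end Cycle

theorem dprimeArc_eq_pendantArc (b : ℕ) : DprimeArc b = pendantArc (cycleArc (2 * b)) := by
  ext (i | i) (j | j)
  · simp only [DprimeArc, pendantArc, cycleArc, Fin.ext_iff, val_finRotate, eq_comm]
  all_goals rfl

theorem domNum_goNum_gap_functional_general (n : ℕ) :
    domNum (pendantArc (cycleArc n)) = n ∧
      goNum (pendantArc (cycleArc n)) 1 = n + (n + 1) / 2 := by
  rw [domNum_pendantArc, goNum_one_pendantArc (leftUnique_cycleArc n), arcCoverNum_cycleArc,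
    Fintype.card_fin]
  exact ⟨rfl, rfl⟩

/-- For the connected functional digraph `D'` (a directed cycle `v₁ → ⋯ → v_{2b} → v₁` with a
pendant in-neighbor `v'ᵢ` attached to each `vᵢ`), `γ(D') = 2b` and `γ₁ᵒ(D') = 3b`; hence
`γ₁ᵒ(D') − γ(D') = b` can be arbitrarily large for connected functional digraphs. -/
theorem domNum_goNum_gap_functional (b : ℕ) (hb : 1 ≤ b) :
    domNum (DprimeArc b) = 2 * b ∧ goNum (DprimeArc b) 1 = 3 * b := by
  have hcard : 2 * b + (2 * b + 1) / 2 = 3 * b := by omega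
  simpa only [dprimeArc_eq_pendantArc, hcard] using domNum_goNum_gap_functional_general (2 * b)
end
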